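/- Let v_0, …, v_d be affinely independent points in ℝ^d, let S be their convex hull, and let δ = max_{i, j} ‖v_i − v_j‖. Let f : ℝ^d → ℝ be continuously differentiable on an open set containing S, with ‖f′(s)‖ ≤ G for all s ∈ S, where f′(s) denotes the derivative (gradient) of f at s and ‖·‖ its Euclidean (operator) norm. Let f_l : ℝ^d → ℝ be the unique affine map with f_l(v_i) = f(v_i) for all i ∈ {0, …, d}. Then for every s ∈ S, |f(s) − f_l(s)| ≤ √(d / (2(d + 1))) · δ · G. -/

import Mathlib

/-!
Write `s = ∑ i, w i • v i`. Convexity of the norm bounds the error at `s` by the weighted mean of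
`‖f (v i) - f s‖`, hence, by the mean value inequality, by `G` times the weighted mean distance from
the `v i` to `s`. The square of this mean distance is at most the weighted variance of the `v i`,
which is half the weighted mean of their squared mutual distances. The diagonal pairs contribute
nothing, so the variance is at most `(1 - ∑ i, w i ^ 2) / 2 * δ ^ 2`, and
`∑ i, w i ^ 2 ≥ 1 / (d + 1)` by Cauchy-Schwarz.
-/

theorem convexHull_range_eq_image_stdSimplex {ι R E : Type*} [Fintype ι] [Field R] [LinearOrder R]
    [IsStrictOrderedRing R] [AddCommGroup E] [Module R E] (v : ι → E) :
    convexHull R (Set.range v) = (fun w : ι → R => ∑ i, w i • v i) '' stdSimplex R ι := by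
  classical
  change _ = Fintype.linearCombination R v '' stdSimplex R ι
  rw [← convexHull_rangle_single_eq_stdSimplex, LinearMap.image_convexHull, ← Set.range_comp]
  congr
  ext i
  simp [Fintype.linearCombination_apply_single]

theorem one_sub_sum_sq_le_div {ι : Type*} [Fintype ι] {w : ι → ℝ} {d : ℕ}
    (hι : Fintype.card ι = d + 1) (hw : ∑ i, w i = 1) :
    1 - ∑ i, w i ^ 2 ≤ d / (d + 1) := by
  have cauchy_schwarz : (1 : ℝ) ≤ (d + 1) * ∑ i, w i ^ 2 := by
    simpa [hw, hι] using sq_sum_le_card_mul_sum_sq (s := Finset.univ) (f := w)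
  rw [le_div_iff₀ (by positivity)]
  linarith

theorem sum_mul_sum_mul_le_of_diag_eq_zero {ι : Type*} [Fintype ι] {w : ι → ℝ} {a : ι → ι → ℝ}
    {c : ℝ} (hw : w ∈ stdSimplex ℝ ι) (ha : ∀ i j, a i j ≤ c) (hdiag : ∀ i, a i i = 0) :
    ∑ j, w j * ∑ i, w i * a i j ≤ (1 - ∑ i, w i ^ 2) * c := by
  classical
  have inner_sum_le (j : ι) : ∑ i, w i * a i j ≤ (1 - w j) * c := by
    calc ∑ i, w i * a i j
        = ∑ i ∈ Finset.univ.erase j, w i * a i j := by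
          rw [Finset.sum_erase _ (by rw [hdiag, mul_zero])]
      _ ≤ ∑ i ∈ Finset.univ.erase j, w i * c :=
          Finset.sum_le_sum fun i _ => mul_le_mul_of_nonneg_left (ha i j) (hw.1 i)
      _ = (1 - w j) * c := by
          rw [← Finset.sum_mul, Finset.sum_erase_eq_sub (Finset.mem_univ j), hw.2]
  calc ∑ j, w j * ∑ i, w i * a i j
      ≤ ∑ j, w j * ((1 - w j) * c) :=
        Finset.sum_le_sum fun j _ => mul_le_mul_of_nonneg_left (inner_sum_le j) (hw.1 j)
    _ = (1 - ∑ i, w i ^ 2) * c := by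
        simp only [← mul_assoc, ← Finset.sum_mul, mul_one_sub, Finset.sum_sub_distrib, hw.2, sq]

section WeightedVariance

variable {ι E : Type*} [Fintype ι] [SeminormedAddCommGroup E] [InnerProductSpace ℝ E]
  {w : ι → ℝ} {v : ι → E} {δ : ℝ}

theorem sum_mul_norm_sub_sq_eq_add_norm_sub_sq (hw : ∑ i, w i = 1) (v : ι → E) (a : E) :
    ∑ i, w i * ‖v i - a‖ ^ 2 =
      ∑ i, w i * ‖v i - ∑ j, w j • v j‖ ^ 2 + ‖∑ j, w j • v j - a‖ ^ 2 := by
  set s := ∑ j, w j • v j with hs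
  have centered : ∑ i, w i • (v i - s) = 0 := by
    simp only [smul_sub, Finset.sum_sub_distrib, ← Finset.sum_smul, hw, one_smul, hs, sub_self]
  have cross : ∑ i, w i * inner ℝ (v i - s) (s - a) = 0 := by
    simp only [← real_inner_smul_left, ← sum_inner, centered, inner_zero_left]
  calc ∑ i, w i * ‖v i - a‖ ^ 2
      = ∑ i, (w i * ‖v i - s‖ ^ 2 + 2 * (w i * inner ℝ (v i - s) (s - a))
          + w i * ‖s - a‖ ^ 2) := by
        refine Finset.sum_congr rfl fun i _ => ?_
        rw [← sub_add_sub_cancel (v i) s a, norm_add_sq_real]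
        ring
    _ = ∑ i, w i * ‖v i - s‖ ^ 2 + ‖s - a‖ ^ 2 := by
        rw [Finset.sum_add_distrib, Finset.sum_add_distrib, ← Finset.mul_sum, ← Finset.sum_mul,
          cross, hw]
        ring

theorem sum_mul_sum_mul_norm_sub_sq (hw : ∑ i, w i = 1) (v : ι → E) :
    ∑ j, w j * ∑ i, w i * ‖v i - v j‖ ^ 2 = 2 * ∑ i, w i * ‖v i - ∑ j, w j • v j‖ ^ 2 := by
  simp only [sum_mul_norm_sub_sq_eq_add_norm_sub_sq hw v (v _), mul_add, Finset.sum_add_distrib,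
    ← Finset.sum_mul, hw, norm_sub_rev (∑ j, w j • v j)]
  ring

theorem sum_mul_norm_sub_sum_smul_sq_le {d : ℕ} (hι : Fintype.card ι = d + 1)
    (hw : w ∈ stdSimplex ℝ ι) (hδ : ∀ i j, ‖v i - v j‖ ≤ δ) :
    ∑ i, w i * ‖v i - ∑ j, w j • v j‖ ^ 2 ≤ d / (2 * (d + 1)) * δ ^ 2 := by
  suffices 2 * ∑ i, w i * ‖v i - ∑ j, w j • v j‖ ^ 2 ≤ d / (d + 1) * δ ^ 2 by
    rw [mul_comm 2 ((d : ℝ) + 1), ← div_div]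
    linarith
  calc 2 * ∑ i, w i * ‖v i - ∑ j, w j • v j‖ ^ 2
      = ∑ j, w j * ∑ i, w i * ‖v i - v j‖ ^ 2 := (sum_mul_sum_mul_norm_sub_sq hw.2 v).symm
    _ ≤ (1 - ∑ i, w i ^ 2) * δ ^ 2 :=
        sum_mul_sum_mul_le_of_diag_eq_zero hw
          (fun i j => pow_le_pow_left₀ (norm_nonneg _) (hδ i j) 2) (fun i => by simp)
    _ ≤ d / (d + 1) * δ ^ 2 :=
        mul_le_mul_of_nonneg_right (one_sub_sum_sq_le_div hι hw.2) (sq_nonneg δ)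

theorem sum_mul_norm_sub_sum_smul_le {d : ℕ} (hι : Fintype.card ι = d + 1)
    (hw : w ∈ stdSimplex ℝ ι) (hδ : ∀ i j, ‖v i - v j‖ ≤ δ) :
    ∑ i, w i * ‖v i - ∑ j, w j • v j‖ ≤ √(d / (2 * (d + 1))) * δ := by
  obtain ⟨i₀⟩ : Nonempty ι := Fintype.card_pos_iff.1 (by lia)
  have δ_nonneg : 0 ≤ δ := (norm_nonneg _).trans (hδ i₀ i₀)
  refine le_of_sq_le_sq ?_ (by positivity)
  calc (∑ i, w i * ‖v i - ∑ j, w j • v j‖) ^ 2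
      ≤ ∑ i, w i * ‖v i - ∑ j, w j • v j‖ ^ 2 :=
        Real.pow_arith_mean_le_arith_mean_pow _ _ _ (fun i _ => hw.1 i) hw.2
          (fun _ _ => norm_nonneg _) 2
    _ ≤ d / (2 * (d + 1)) * δ ^ 2 := sum_mul_norm_sub_sum_smul_sq_le hι hw hδ
    _ = (√(d / (2 * (d + 1))) * δ) ^ 2 := by rw [mul_pow, Real.sq_sqrt (by positivity)]

end WeightedVariance

theorem interpolation_error_C1_general {ι E F : Type*} [Fintype ι] [NormedAddCommGroup E]
    [InnerProductSpace ℝ E] [NormedAddCommGroup F] [NormedSpace ℝ F] {d : ℕ}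
    (hι : Fintype.card ι = d + 1) {v : ι → E} {δ : ℝ} (hδ : ∀ i j, ‖v i - v j‖ ≤ δ)
    {f : E → F} {f' : E → E →L[ℝ] F} {G : ℝ}
    (hf : ∀ x ∈ convexHull ℝ (Set.range v),
      HasFDerivWithinAt f (f' x) (convexHull ℝ (Set.range v)) x)
    (hG : ∀ x ∈ convexHull ℝ (Set.range v), ‖f' x‖ ≤ G)
    {fl : E →ᵃ[ℝ] F} (hfl : ∀ i, fl (v i) = f (v i)) {s : E}
    (hs : s ∈ convexHull ℝ (Set.range v)) :
    ‖f s - fl s‖ ≤ √(d / (2 * (d + 1))) * δ * G := by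
  have G_nonneg : 0 ≤ G := (norm_nonneg _).trans (hG s hs)
  have mean_value (i : ι) : ‖f (v i) - f s‖ ≤ G * ‖v i - s‖ :=
    (convex_convexHull ℝ _).norm_image_sub_le_of_norm_hasFDerivWithin_le hf hG hs
      (subset_convexHull ℝ _ ⟨i, rfl⟩)
  obtain ⟨w, hw, hws : ∑ i, w i • v i = s⟩ :=
    (convexHull_range_eq_image_stdSimplex v).subset hs
  have jensen : ‖f s - fl s‖ ≤ ∑ i, w i * ‖f (v i) - f s‖ := by
    have := ((convexOn_dist (f s) convex_univ).comp_affineMap fl).map_sum_le (t := Finset.univ)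
      (fun i _ => hw.1 i) hw.2 (fun i _ => Set.mem_univ (v i))
    simpa [hws, hfl, dist_eq_norm, norm_sub_rev (f s)] using this
  calc ‖f s - fl s‖ ≤ ∑ i, w i * ‖f (v i) - f s‖ := jensen
    _ ≤ ∑ i, w i * (G * ‖v i - s‖) :=
        Finset.sum_le_sum fun i _ => mul_le_mul_of_nonneg_left (mean_value i) (hw.1 i)
    _ = (∑ i, w i * ‖v i - ∑ j, w j • v j‖) * G := by
        rw [hws, Finset.sum_mul]
        exact Finset.sum_congr rfl fun i _ => by ring
    _ ≤ √(d / (2 * (d + 1))) * δ * G :=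
        mul_le_mul_of_nonneg_right (sum_mul_norm_sub_sum_smul_le hι hw hδ) G_nonneg

/-- Case (iii) of the paper's Lemma 1 (Stämpfle 2000): the linear interpolation
error of a `C¹` function on a `d`-simplex of diameter `δ` is bounded by
`√(d / (2(d + 1))) · δ · G`, where `G` bounds the norm of the derivative on
the simplex. -/
theorem interpolation_error_C1 (d : ℕ)
    (v : Fin (d + 1) → EuclideanSpace ℝ (Fin d))
    (hv : AffineIndependent ℝ v)
    (S : Set (EuclideanSpace ℝ (Fin d)))
    (hS : S = convexHull ℝ (Set.range v))
    (δ : ℝ)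
    (hδ : IsGreatest {r : ℝ | ∃ i j, r = ‖v i - v j‖} δ)
    (f : EuclideanSpace ℝ (Fin d) → ℝ)
    (U : Set (EuclideanSpace ℝ (Fin d))) (hU : IsOpen U) (hSU : S ⊆ U)
    (hf : ContDiffOn ℝ 1 f U)
    (G : ℝ)
    (hG : ∀ s ∈ S, ‖fderiv ℝ f s‖ ≤ G)
    (fl : EuclideanSpace ℝ (Fin d) →ᵃ[ℝ] ℝ)
    (hfl : ∀ i, fl (v i) = f (v i)) :
    ∀ s ∈ S, |f s - fl s| ≤ Real.sqrt (d / (2 * (d + 1))) * δ * G := by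
  subst hS
  have hasFDerivWithinAt : ∀ x ∈ convexHull ℝ (Set.range v),
      HasFDerivWithinAt f (fderiv ℝ f x) (convexHull ℝ (Set.range v)) x := fun x hx =>
    ((hf.differentiableOn one_ne_zero).hasFDerivAt (hU.mem_nhds (hSU hx))).hasFDerivWithinAt
  exact fun s => interpolation_error_C1_general (Fintype.card_fin _) (fun i j => hδ.2 ⟨i, j, rfl⟩)
    hasFDerivWithinAt hG hfl
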